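/- arXiv:2408.02744 — 2 statements merged into one kernel-verified Lean document; each statement's English description precedes it below -/
import Mathlib

section
/- Let Λ be an even, self-dual Lorentzian lattice of signature (m,n). Then the following are equivalent: (1) the quotient group Λ/Λ_0 is finite; (2) the ℤ-module Λ_0 has rank m+n; (3) the ℤ-module Λ_1^0 has rank m; (4) the ℤ-module Λ_2^0 has rank n. -/
/-!
The projection of `Λ` to `ℝ^m` pairs integrally with `Λ₁⁰` under the Euclidean inner product,
because every `(α, 0)` with `α ∈ Λ₁⁰` lies in `Λ`. If `Λ₁⁰` spans `ℝ^m`, its dual has rank at most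
`rk Λ₁⁰ = m`; the kernel of the projection is `Λ₂⁰`, so `m + n = rk Λ ≤ m + rk Λ₂⁰`. Conversely
`rk Λ₂⁰ ≤ n`, since a subgroup of Euclidean space on which the inner product is integral has no
nonzero vector of norm less than one, hence is discrete. The same holds with the factors exchanged.
-/

open Finset

noncomputable section

/-- The Lorentzian inner product of signature `(m,n)` on `ℝ^m × ℝ^n`. -/
def lorentzForm {m n : ℕ} (x y : (Fin m → ℝ) × (Fin n → ℝ)) : ℝ :=
  (∑ i, x.1 i * y.1 i) - (∑ j, x.2 j * y.2 j)

/-- `Λ` is an even lattice: `λ ∘ λ ∈ 2ℤ` for all `λ ∈ Λ`. -/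
def IsEvenLat {m n : ℕ} (Λ : Submodule ℤ ((Fin m → ℝ) × (Fin n → ℝ))) : Prop :=
  ∀ x ∈ Λ, ∃ k : ℤ, lorentzForm x x = 2 * k

/-- `Λ` is an integral lattice: `λ ∘ μ ∈ ℤ` for all `λ, μ ∈ Λ`. -/
def IsIntegralLat {m n : ℕ} (Λ : Submodule ℤ ((Fin m → ℝ) × (Fin n → ℝ))) : Prop :=
  ∀ x ∈ Λ, ∀ y ∈ Λ, ∃ k : ℤ, lorentzForm x y = (k : ℝ)

/-- `Λ` is self-dual with respect to the Lorentzian form. -/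
def IsSelfDualLat {m n : ℕ} (Λ : Submodule ℤ ((Fin m → ℝ) × (Fin n → ℝ))) : Prop :=
  (Λ : Set ((Fin m → ℝ) × (Fin n → ℝ)))
    = {v | ∀ y ∈ Λ, ∃ k : ℤ, lorentzForm v y = (k : ℝ)}

/-- The sublattice `Λ_1^0 = {α ∈ ℝ^m : (α,0) ∈ Λ}`. -/
def lat10 {m n : ℕ} (Λ : Submodule ℤ ((Fin m → ℝ) × (Fin n → ℝ))) :
    Submodule ℤ (Fin m → ℝ) :=
  Λ.comap (LinearMap.inl ℤ (Fin m → ℝ) (Fin n → ℝ))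

/-- The sublattice `Λ_2^0 = {β ∈ ℝ^n : (0,β) ∈ Λ}`. -/
def lat20 {m n : ℕ} (Λ : Submodule ℤ ((Fin m → ℝ) × (Fin n → ℝ))) :
    Submodule ℤ (Fin n → ℝ) :=
  Λ.comap (LinearMap.inr ℤ (Fin m → ℝ) (Fin n → ℝ))

/-- The sublattice `Λ_0 = Λ_1^0 ⊕ Λ_2^0`. -/
def lat0 {m n : ℕ} (Λ : Submodule ℤ ((Fin m → ℝ) × (Fin n → ℝ))) :
    Submodule ℤ ((Fin m → ℝ) × (Fin n → ℝ)) :=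
  (lat10 Λ).prod (lat20 Λ)

/-- The dual lattice `L^* = {x : ⟨x,y⟩ ∈ ℤ for all y ∈ L}` of a lattice `L ⊆ ℝ^d`. -/
def dualLat {d : ℕ} (L : Submodule ℤ (Fin d → ℝ)) : Submodule ℤ (Fin d → ℝ) where
  carrier := {x | ∀ y ∈ L, ∃ k : ℤ, ∑ i, x i * y i = (k : ℝ)}
  add_mem' := by
    intro a b ha hb y hy
    obtain ⟨k1, h1⟩ := ha y hy
    obtain ⟨k2, h2⟩ := hb y hy
    refine ⟨k1 + k2, ?_⟩
    push_cast
    rw [← h1, ← h2, ← Finset.sum_add_distrib]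
    exact Finset.sum_congr rfl fun i _ => by simp [add_mul]
  zero_mem' := fun y hy => ⟨0, by simp⟩
  smul_mem' := by
    intro c a ha y hy
    obtain ⟨k, h⟩ := ha y hy
    refine ⟨c * k, ?_⟩
    push_cast
    rw [← h, Finset.mul_sum]
    exact Finset.sum_congr rfl fun i _ => by simp [zsmul_eq_mul]; ring

end

open Module Submodule

section LinearAlgebra

universe u

theorem finrank_map_add_finrank_comap_of_exact {R M P : Type*} {N : Type u} [Ring R]
    [StrongRankCondition R] [AddCommGroup M] [Module R M] [AddCommGroup N] [Module R N]
    [AddCommGroup P] [Module R P] [HasRankNullity.{u} R] {f : M →ₗ[R] N} {g : N →ₗ[R] P}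
    (hf : Function.Injective f) (hfg : Function.Exact f g) (p : Submodule R N) [Module.Finite R p] :
    finrank R (p.map g) + finrank R (p.comap f) = finrank R p := by
  have hrange : finrank R (p ⧸ (g.domRestrict p).ker) = finrank R (p.map g) := by
    rw [(g.domRestrict p).quotKerEquivRange.finrank_eq, LinearMap.range_domRestrict]
  have hker : finrank R (g.domRestrict p).ker = finrank R (p.comap f) := by
    rw [LinearMap.ker_domRestrict, hfg.linearMap_ker_eq,
      (equivMapOfInjective p.subtype p.subtype_injective _).finrank_eq, map_comap_subtype,
      (equivMapOfInjective f hf _).finrank_eq, map_comap_eq, inf_comm]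
  rw [← hrange, ← hker, finrank_quotient_add_finrank]

theorem finrank_le_of_le_dualSubmodule {R S M : Type*} [CommRing R] [IsDomain R] [Field S]
    [Algebra R S] [IsTorsionFree R S] [AddCommGroup M] [Module R M] [Module S M]
    [IsScalarTower R S M] {B : LinearMap.BilinForm S M} (hB : B.Nondegenerate)
    {K L : Submodule R M} [Module.Free R L] [Module.Finite R L]
    (hL : span S (L : Set M) = ⊤) (hK : K ≤ B.dualSubmodule L) :
    finrank R K ≤ finrank R L := by
  have hinj : Function.Injective (B.dualSubmoduleToDual L ∘ₗ inclusion hK) :=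
    (B.dualSubmoduleToDual_injective hB L hL).comp (inclusion_injective hK)
  rw [(finBasis R L).toDualEquiv.finrank_eq]
  exact LinearMap.finrank_le_finrank_of_injective hinj

theorem nondegenerate_dotProductBilin {ι R : Type*} [Fintype ι] [CommRing R] [LinearOrder R]
    [IsStrictOrderedRing R] :
    LinearMap.BilinForm.Nondegenerate (dotProductBilin R R : LinearMap.BilinForm R (ι → R)) :=
  ⟨fun x hx => dotProduct_self_eq_zero.mp (hx x), fun x hx => dotProduct_self_eq_zero.mp (hx x)⟩

end LinearAlgebra

section DualLattice

variable {d : ℕ} {K L : Submodule ℤ (Fin d → ℝ)}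

theorem dualLat_eq_dualSubmodule (L : Submodule ℤ (Fin d → ℝ)) :
    dualLat L = LinearMap.BilinForm.dualSubmodule (dotProductBilin ℝ ℝ) L := by
  ext x
  refine forall₂_congr fun y _ => ?_
  rw [Submodule.mem_one]
  exact exists_congr fun k => eq_comm

theorem discreteTopology_of_le_dualLat (hL : L ≤ dualLat L) : DiscreteTopology L := by
  refine discreteTopology_of_isOpen_singleton_zero ?_
  have hopen : IsOpen {x : L | (x : Fin d → ℝ) ⬝ᵥ x < 1} :=
    isOpen_lt (continuous_subtype_val.dotProduct continuous_subtype_val) continuous_const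
  convert! hopen
  ext x
  refine ⟨by rintro rfl; simp, fun hx => Subtype.ext (dotProduct_self_eq_zero.mp ?_)⟩
  obtain ⟨k, hk⟩ : ∃ k : ℤ, (x : Fin d → ℝ) ⬝ᵥ x = k := hL x.2 x x.2
  have hnonneg : 0 ≤ (x : Fin d → ℝ) ⬝ᵥ x := dotProduct_self_star_nonneg _
  have hlt : (x : Fin d → ℝ) ⬝ᵥ x < 1 := hx
  rw [hk] at hnonneg hlt ⊢
  norm_cast at hnonneg hlt ⊢
  omega

theorem finrank_span_of_le_dualLat (hL : L ≤ dualLat L) :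
    finrank ℝ (span ℝ (L : Set (Fin d → ℝ))) = finrank ℤ L := by
  have hdisc : DiscreteTopology (span ℤ (L : Set (Fin d → ℝ))) := by
    rw [span_eq]
    exact discreteTopology_of_le_dualLat hL
  have h := Real.finrank_eq_int_finrank_of_discrete hdisc
  rwa [Set.finrank, Set.finrank, span_eq] at h

theorem finrank_le_of_le_dualLat_self (hL : L ≤ dualLat L) : finrank ℤ L ≤ d := by
  rw [← finrank_span_of_le_dualLat hL]
  exact (finrank_le _).trans_eq (finrank_fin_fun ℝ)

theorem finrank_le_of_le_dualLat (hL : L ≤ dualLat L) (hrank : finrank ℤ L = d)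
    (hK : K ≤ dualLat L) : finrank ℤ K ≤ d := by
  have := discreteTopology_of_le_dualLat hL
  have hspan : span ℝ (L : Set (Fin d → ℝ)) = ⊤ :=
    eq_top_of_finrank_eq (by rw [finrank_span_of_le_dualLat hL, hrank, finrank_fin_fun])
  rw [dualLat_eq_dualSubmodule] at hK
  exact (finrank_le_of_le_dualSubmodule nondegenerate_dotProductBilin hspan hK).trans_eq hrank

end DualLattice

section LorentzianLattice

variable {m n : ℕ} (Λ : Submodule ℤ ((Fin m → ℝ) × (Fin n → ℝ)))

theorem lat0_le : lat0 Λ ≤ Λ := by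
  rintro ⟨α, β⟩ ⟨hα, hβ⟩
  have hαΛ : (α, (0 : Fin n → ℝ)) ∈ Λ := hα
  have hβΛ : ((0 : Fin m → ℝ), β) ∈ Λ := hβ
  simpa using Λ.add_mem hαΛ hβΛ

theorem finrank_map_fst_add_finrank_lat20 [Module.Finite ℤ Λ] :
    finrank ℤ (Λ.map (LinearMap.fst ℤ _ _)) + finrank ℤ (lat20 Λ) = finrank ℤ Λ :=
  finrank_map_add_finrank_comap_of_exact LinearMap.inr_injective Function.Exact.inr_fst Λ

theorem finrank_map_snd_add_finrank_lat10 [Module.Finite ℤ Λ] :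
    finrank ℤ (Λ.map (LinearMap.snd ℤ _ _)) + finrank ℤ (lat10 Λ) = finrank ℤ Λ :=
  finrank_map_add_finrank_comap_of_exact LinearMap.inl_injective Function.Exact.inl_snd Λ

theorem finrank_lat0 [Module.Finite ℤ Λ] :
    finrank ℤ (lat0 Λ) = finrank ℤ (lat10 Λ) + finrank ℤ (lat20 Λ) := by
  have : Module.Finite ℤ (lat0 Λ) := .of_injective _ (inclusion_injective (lat0_le Λ))
  have h := finrank_map_fst_add_finrank_lat20 (lat0 Λ)
  rwa [lat20, lat0, prod_map_fst, prod_comap_inr, eq_comm] at h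

theorem finite_quotient_lat0_iff [Module.Finite ℤ Λ] :
    Finite (Λ ⧸ (lat0 Λ).comap Λ.subtype) ↔ finrank ℤ (lat0 Λ) = finrank ℤ Λ := by
  rw [finiteQuotient_iff, (comapSubtypeEquivOfLe (lat0_le Λ)).finrank_eq]

variable {Λ}

theorem IsSelfDualLat.isIntegralLat (hΛ : IsSelfDualLat Λ) : IsIntegralLat Λ :=
  fun _ hx => hΛ.subset hx

namespace IsIntegralLat

theorem map_fst_le_dualLat (hΛ : IsIntegralLat Λ) :
    Λ.map (LinearMap.fst ℤ _ _) ≤ dualLat (lat10 Λ) := by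
  rintro _ ⟨v, hv, rfl⟩ α hα
  obtain ⟨k, hk⟩ := hΛ v hv (α, 0) hα
  exact ⟨k, by simpa [lorentzForm] using hk⟩

theorem map_snd_le_dualLat (hΛ : IsIntegralLat Λ) :
    Λ.map (LinearMap.snd ℤ _ _) ≤ dualLat (lat20 Λ) := by
  rintro _ ⟨v, hv, rfl⟩ β hβ
  obtain ⟨k, hk⟩ := hΛ v hv (0, β) hβ
  exact ⟨-k, by simp [← hk, lorentzForm]⟩

theorem lat10_le_dualLat (hΛ : IsIntegralLat Λ) : lat10 Λ ≤ dualLat (lat10 Λ) :=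
  fun α hα => hΛ.map_fst_le_dualLat ⟨(α, 0), hα, rfl⟩

theorem lat20_le_dualLat (hΛ : IsIntegralLat Λ) : lat20 Λ ≤ dualLat (lat20 Λ) :=
  fun β hβ => hΛ.map_snd_le_dualLat ⟨(0, β), hβ, rfl⟩

theorem finrank_le_add_finrank_lat20 [Module.Finite ℤ Λ] (hΛ : IsIntegralLat Λ)
    (h : finrank ℤ (lat10 Λ) = m) : finrank ℤ Λ ≤ m + finrank ℤ (lat20 Λ) := by
  rw [← finrank_map_fst_add_finrank_lat20]
  gcongr
  exact finrank_le_of_le_dualLat hΛ.lat10_le_dualLat h hΛ.map_fst_le_dualLat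

theorem finrank_le_add_finrank_lat10 [Module.Finite ℤ Λ] (hΛ : IsIntegralLat Λ)
    (h : finrank ℤ (lat20 Λ) = n) : finrank ℤ Λ ≤ n + finrank ℤ (lat10 Λ) := by
  rw [← finrank_map_snd_add_finrank_lat10]
  gcongr
  exact finrank_le_of_le_dualLat hΛ.lat20_le_dualLat h hΛ.map_snd_le_dualLat

end IsIntegralLat

end LorentzianLattice

theorem llcft_rationality_tfae_general {m n : ℕ}
    (Λ : Submodule ℤ ((Fin m → ℝ) × (Fin n → ℝ))) [Module.Finite ℤ Λ]
    (hrank : finrank ℤ Λ = m + n) (hint : IsIntegralLat Λ) :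
    List.TFAE
      [Finite (Λ ⧸ (lat0 Λ).comap Λ.subtype),
       finrank ℤ (lat0 Λ) = m + n,
       finrank ℤ (lat10 Λ) = m,
       finrank ℤ (lat20 Λ) = n] := by
  have h0 := finrank_lat0 Λ
  have hm : finrank ℤ (lat10 Λ) ≤ m := finrank_le_of_le_dualLat_self hint.lat10_le_dualLat
  have hn : finrank ℤ (lat20 Λ) ≤ n := finrank_le_of_le_dualLat_self hint.lat20_le_dualLat
  tfae_have 1 ↔ 2 := by rw [finite_quotient_lat0_iff, hrank]
  tfae_have 2 → 3 := by omega
  tfae_have 3 → 4 := fun h => by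
    have := hint.finrank_le_add_finrank_lat20 h
    omega
  tfae_have 4 → 2 := fun h => by
    have := hint.finrank_le_add_finrank_lat10 h
    omega
  tfae_finish

/-- For an even, self-dual Lorentzian lattice `Λ` of signature `(m,n)`,
the following are equivalent: (1) `Λ/Λ₀` is finite; (2) `rk Λ₀ = m+n`;
(3) `rk Λ₁⁰ = m`; (4) `rk Λ₂⁰ = n`. -/
theorem llcft_rationality_tfae {m n : ℕ}
    (Λ : Submodule ℤ ((Fin m → ℝ) × (Fin n → ℝ)))
    (hfree : Module.Free ℤ Λ) (hfg : Module.Finite ℤ Λ)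
    (hrank : Module.finrank ℤ Λ = m + n)
    (hspan : Submodule.span ℝ (Λ : Set ((Fin m → ℝ) × (Fin n → ℝ))) = ⊤)
    (heven : IsEvenLat Λ) (hsd : IsSelfDualLat Λ) :
    List.TFAE
      [Finite ((↥Λ) ⧸ (lat0 Λ).comap Λ.subtype),
       Module.finrank ℤ (lat0 Λ) = m + n,
       Module.finrank ℤ (lat10 Λ) = m,
       Module.finrank ℤ (lat20 Λ) = n] := by
  exact llcft_rationality_tfae_general Λ hrank hsd.isIntegralLat
end

section
/- Let Γ ⊆ ℝ^m be a full-rank lattice with dual Γ^*, let B be a real antisymmetric m×m matrix (acting on row vectors by right multiplication), and define the Narain lattice Λ_S := {(1/√2)(μ + λ(𝟙+B), μ − λ(𝟙−B)) : μ ∈ Γ^*, λ ∈ Γ} ⊆ ℝ^m × ℝ^m. Define Λ_l^0 := {(μ, λ) ∈ Γ^* × Γ : μ = λ(𝟙−B)} and Λ_r^0 := {(μ, λ) ∈ Γ^* × Γ : μ = −λ(𝟙+B)}, and let G' be the invertible linear map of ℝ^m × ℝ^m sending (μ, λ) to (1/√2)(μ + λ(𝟙+B), μ + λ(−𝟙+B)).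 Then G' maps Λ_l^0 bijectively onto {(α, 0) : α ∈ (Λ_S)_1^0} and maps Λ_r^0 bijectively onto {(0, β) : β ∈ (Λ_S)_2^0}; consequently rank (Λ_S)_1^0 = rank Λ_l^0 and rank (Λ_S)_2^0 = rank Λ_r^0, so Wendland's rationality conditions rank Λ_l^0 = m and rank Λ_r^0 = m are equivalent to rank (Λ_S)_1^0 = m and rank (Λ_S)_2^0 = m respectively. -/
/-! The two maps `G` and `G'` coincide, so `Λ_S` is the image of `Γ^* × Γ` under `G'`, and
`Λ_l^0`, `Λ_r^0` are the parts of `Γ^* × Γ` on which the second, respectively first, component of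
`G'` vanishes. Since `G'` is injective, it carries these onto the elements of `Λ_S` whose second,
respectively first, component vanishes. -/

open Finset Complex

noncomputable section

variable {m : ℕ}

/-- The linear map `(μ, λ) ↦ (1/√2)(μ + λ(𝟙+B), μ - λ(𝟙-B))` defining the Narain lattice
`Λ_S` (row vectors, matrices acting by right multiplication). -/
def narainG (B : Matrix (Fin m) (Fin m) ℝ) :
    ((Fin m → ℝ) × (Fin m → ℝ)) →ₗ[ℝ] ((Fin m → ℝ) × (Fin m → ℝ)) :=
  LinearMap.prod
    ((Real.sqrt 2)⁻¹ •
      (LinearMap.fst ℝ (Fin m → ℝ) (Fin m → ℝ) +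
        (Matrix.vecMulLinear (1 + B)).comp (LinearMap.snd ℝ (Fin m → ℝ) (Fin m → ℝ))))
    ((Real.sqrt 2)⁻¹ •
      (LinearMap.fst ℝ (Fin m → ℝ) (Fin m → ℝ) -
        (Matrix.vecMulLinear (1 - B)).comp (LinearMap.snd ℝ (Fin m → ℝ) (Fin m → ℝ))))

/-- The linear map `G' : (μ, λ) ↦ (1/√2)(μ + λ(𝟙+B), μ + λ(-𝟙+B))`. -/
def narainG' (B : Matrix (Fin m) (Fin m) ℝ) :
    ((Fin m → ℝ) × (Fin m → ℝ)) →ₗ[ℝ] ((Fin m → ℝ) × (Fin m → ℝ)) :=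
  LinearMap.prod
    ((Real.sqrt 2)⁻¹ •
      (LinearMap.fst ℝ (Fin m → ℝ) (Fin m → ℝ) +
        (Matrix.vecMulLinear (1 + B)).comp (LinearMap.snd ℝ (Fin m → ℝ) (Fin m → ℝ))))
    ((Real.sqrt 2)⁻¹ •
      (LinearMap.fst ℝ (Fin m → ℝ) (Fin m → ℝ) +
        (Matrix.vecMulLinear (-1 + B)).comp (LinearMap.snd ℝ (Fin m → ℝ) (Fin m → ℝ))))

/-- The Narain lattice `Λ_S = {(1/√2)(μ + λ(𝟙+B), μ - λ(𝟙-B)) : μ ∈ Γ^*, λ ∈ Γ}`. -/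
def narainLatS (Γ : Submodule ℤ (Fin m → ℝ)) (B : Matrix (Fin m) (Fin m) ℝ) :
    Submodule ℤ ((Fin m → ℝ) × (Fin m → ℝ)) :=
  Submodule.map ((narainG B).restrictScalars ℤ) ((dualLat Γ).prod Γ)

/-- `Λ_l^0 = {(μ, λ) ∈ Γ^* × Γ : μ = λ(𝟙-B)}`. -/
def wendLatL (Γ : Submodule ℤ (Fin m → ℝ)) (B : Matrix (Fin m) (Fin m) ℝ) :
    Submodule ℤ ((Fin m → ℝ) × (Fin m → ℝ)) :=
  ((dualLat Γ).prod Γ) ⊓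
    LinearMap.ker ((LinearMap.fst ℝ (Fin m → ℝ) (Fin m → ℝ) -
      (Matrix.vecMulLinear (1 - B)).comp
        (LinearMap.snd ℝ (Fin m → ℝ) (Fin m → ℝ))).restrictScalars ℤ)

/-- `Λ_r^0 = {(μ, λ) ∈ Γ^* × Γ : μ = -λ(𝟙+B)}`. -/
def wendLatR (Γ : Submodule ℤ (Fin m → ℝ)) (B : Matrix (Fin m) (Fin m) ℝ) :
    Submodule ℤ ((Fin m → ℝ) × (Fin m → ℝ)) :=
  ((dualLat Γ).prod Γ) ⊓
    LinearMap.ker ((LinearMap.fst ℝ (Fin m → ℝ) (Fin m → ℝ) +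
      (Matrix.vecMulLinear (1 + B)).comp
        (LinearMap.snd ℝ (Fin m → ℝ) (Fin m → ℝ))).restrictScalars ℤ)

/-- The sublattice `Λ₁⁰ = {α : (α,0) ∈ Λ}` of a lattice `Λ ⊆ ℝ^m × ℝ^m`. -/
def lat10' (Λ : Submodule ℤ ((Fin m → ℝ) × (Fin m → ℝ))) : Submodule ℤ (Fin m → ℝ) :=
  Λ.comap (LinearMap.inl ℤ (Fin m → ℝ) (Fin m → ℝ))

/-- The sublattice `Λ₂⁰ = {β : (0,β) ∈ Λ}` of a lattice `Λ ⊆ ℝ^m × ℝ^m`. -/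
def lat20' (Λ : Submodule ℤ ((Fin m → ℝ) × (Fin m → ℝ))) : Submodule ℤ (Fin m → ℝ) :=
  Λ.comap (LinearMap.inr ℤ (Fin m → ℝ) (Fin m → ℝ))

section ExactPair

variable {R M N P Q : Type*} [Semiring R] [AddCommMonoid M] [AddCommMonoid N]
  [AddCommMonoid P] [AddCommMonoid Q] [Module R M] [Module R N] [Module R P] [Module R Q]
  {i : N →ₗ[R] Q} {g : Q →ₗ[R] P}

theorem map_inf_ker_comp_of_exact (hig : Function.Exact i g) (f : M →ₗ[R] Q)
    (S : Submodule R M) :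
    (S ⊓ LinearMap.ker (g ∘ₗ f)).map f = ((S.map f).comap i).map i := by
  rw [LinearMap.ker_comp, ← Submodule.map_inf_eq_map_inf_comap, hig.linearMap_ker_eq, inf_comm,
    Submodule.map_comap_eq]

theorem bijOn_inf_ker_comp_of_exact (hig : Function.Exact i g) {f : M →ₗ[R] Q}
    (hf : Function.Injective f) (S : Submodule R M) :
    Set.BijOn f (S ⊓ LinearMap.ker (g ∘ₗ f) : Submodule R M) (i '' ((S.map f).comap i)) := by
  rw [← Submodule.map_coe i, ← map_inf_ker_comp_of_exact hig f S, Submodule.map_coe]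
  exact hf.injOn.bijOn_image

/-- The isomorphism induced by `f` from the part of `S` that `f` sends into `ker g = range i` to
the elements of `N` that `i` sends into `f(S)`. -/
def infKerCompEquivOfExact (hi : Function.Injective i) (hig : Function.Exact i g)
    {f : M →ₗ[R] Q} (hf : Function.Injective f) (S : Submodule R M) :
    ↥(S ⊓ LinearMap.ker (g ∘ₗ f)) ≃ₗ[R] (S.map f).comap i :=
  (Submodule.equivMapOfInjective f hf _).trans <|
    (LinearEquiv.ofEq _ _ (map_inf_ker_comp_of_exact hig f S)).trans
      (Submodule.equivMapOfInjective i hi _).symm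

end ExactPair

theorem narainG_apply (B : Matrix (Fin m) (Fin m) ℝ) (p : (Fin m → ℝ) × (Fin m → ℝ)) :
    narainG B p = ((√2)⁻¹ • (p.1 + Matrix.vecMul p.2 (1 + B)),
      (√2)⁻¹ • (p.1 - Matrix.vecMul p.2 (1 - B))) := rfl

theorem narainG'_apply (B : Matrix (Fin m) (Fin m) ℝ) (p : (Fin m → ℝ) × (Fin m → ℝ)) :
    narainG' B p = ((√2)⁻¹ • (p.1 + Matrix.vecMul p.2 (1 + B)),
      (√2)⁻¹ • (p.1 + Matrix.vecMul p.2 (-1 + B))) := rfl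

theorem narainG_eq_narainG' (B : Matrix (Fin m) (Fin m) ℝ) : narainG B = narainG' B := by
  refine LinearMap.ext fun p => ?_
  rw [narainG_apply, narainG'_apply, sub_eq_add_neg, ← Matrix.vecMul_neg, neg_sub', sub_neg_eq_add]

theorem narainG'_fst_sub_snd (B : Matrix (Fin m) (Fin m) ℝ) (p : (Fin m → ℝ) × (Fin m → ℝ)) :
    (narainG' B p).1 - (narainG' B p).2 = √2 • p.2 := by
  calc (narainG' B p).1 - (narainG' B p).2
      = ((√2)⁻¹ * 2) • p.2 := by
        simp only [narainG'_apply, Matrix.vecMul_add, Matrix.vecMul_neg, Matrix.vecMul_one]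
        module
    _ = √2 • p.2 := by rw [inv_mul_eq_div, Real.div_sqrt]

theorem narainG'_injective (B : Matrix (Fin m) (Fin m) ℝ) :
    Function.Injective (narainG' B) := by
  rw [← LinearMap.ker_eq_bot, LinearMap.ker_eq_bot']
  intro p hp
  have hsnd : p.2 = 0 := by simpa [hp] using (narainG'_fst_sub_snd B p).symm
  have hfst : p.1 = 0 := by simpa [narainG'_apply, hsnd] using congrArg Prod.fst hp
  exact Prod.ext hfst hsnd

theorem narainG'_bijective (B : Matrix (Fin m) (Fin m) ℝ) :
    Function.Bijective (narainG' B) :=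
  ⟨narainG'_injective B, LinearMap.injective_iff_surjective.mp (narainG'_injective B)⟩

section Lattice

variable {Γ : Submodule ℤ (Fin m → ℝ)} {B : Matrix (Fin m) (Fin m) ℝ}

theorem mem_wendLatL {p : (Fin m → ℝ) × (Fin m → ℝ)} :
    p ∈ wendLatL Γ B ↔
      p ∈ (dualLat Γ).prod Γ ∧ p.1 - Matrix.vecMul p.2 (1 - B) = 0 := Iff.rfl

theorem mem_wendLatR {p : (Fin m → ℝ) × (Fin m → ℝ)} :
    p ∈ wendLatR Γ B ↔
      p ∈ (dualLat Γ).prod Γ ∧ p.1 + Matrix.vecMul p.2 (1 + B) = 0 := Iff.rfl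

variable (Γ B)

theorem narainLatS_eq_map_narainG' :
    narainLatS Γ B = ((dualLat Γ).prod Γ).map ((narainG' B).restrictScalars ℤ) := by
  rw [narainLatS, narainG_eq_narainG']

theorem wendLatL_eq_inf_ker_snd_comp_narainG' :
    wendLatL Γ B = (dualLat Γ).prod Γ ⊓
      LinearMap.ker (LinearMap.snd ℤ _ _ ∘ₗ (narainG' B).restrictScalars ℤ) := by
  ext p
  have hsqrt : (√2)⁻¹ ≠ 0 := by positivity
  rw [mem_wendLatL, Submodule.mem_inf, LinearMap.mem_ker, LinearMap.comp_apply,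
    LinearMap.restrictScalars_apply, LinearMap.snd_apply, ← narainG_eq_narainG', narainG_apply,
    smul_eq_zero_iff_right hsqrt]

theorem wendLatR_eq_inf_ker_fst_comp_narainG' :
    wendLatR Γ B = (dualLat Γ).prod Γ ⊓
      LinearMap.ker (LinearMap.fst ℤ _ _ ∘ₗ (narainG' B).restrictScalars ℤ) := by
  ext p
  have hsqrt : (√2)⁻¹ ≠ 0 := by positivity
  rw [mem_wendLatR, Submodule.mem_inf, LinearMap.mem_ker, LinearMap.comp_apply,
    LinearMap.restrictScalars_apply, LinearMap.fst_apply, narainG'_apply,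
    smul_eq_zero_iff_right hsqrt]

end Lattice

theorem wendland_comparison_general (Γ : Submodule ℤ (Fin m → ℝ))
    (B : Matrix (Fin m) (Fin m) ℝ) :
    Function.Bijective (narainG' B) ∧
    Set.BijOn (narainG' B) (wendLatL Γ B : Set ((Fin m → ℝ) × (Fin m → ℝ)))
      ((fun α => (α, (0 : Fin m → ℝ))) '' (lat10' (narainLatS Γ B) : Set (Fin m → ℝ))) ∧
    Set.BijOn (narainG' B) (wendLatR Γ B : Set ((Fin m → ℝ) × (Fin m → ℝ)))
      ((fun β => ((0 : Fin m → ℝ), β)) '' (lat20' (narainLatS Γ B) : Set (Fin m → ℝ))) ∧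
    Module.rank ℤ (lat10' (narainLatS Γ B)) = Module.rank ℤ (wendLatL Γ B) ∧
    Module.rank ℤ (lat20' (narainLatS Γ B)) = Module.rank ℤ (wendLatR Γ B) := by
  have hinj : Function.Injective ((narainG' B).restrictScalars ℤ) := narainG'_injective B
  rw [wendLatL_eq_inf_ker_snd_comp_narainG', wendLatR_eq_inf_ker_fst_comp_narainG',
    narainLatS_eq_map_narainG']
  exact ⟨narainG'_bijective B,
    bijOn_inf_ker_comp_of_exact .inl_snd hinj _,
    bijOn_inf_ker_comp_of_exact .inr_fst hinj _,
    (infKerCompEquivOfExact LinearMap.inl_injective .inl_snd hinj _).rank_eq.symm,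
    (infKerCompEquivOfExact LinearMap.inr_injective .inr_fst hinj _).rank_eq.symm⟩

/-- Wendland's rationality conditions: `G'` maps `Λ_l^0` bijectively onto
`{(α,0) : α ∈ (Λ_S)₁⁰}` and `Λ_r^0` bijectively onto `{(0,β) : β ∈ (Λ_S)₂⁰}`; consequently
`rk (Λ_S)₁⁰ = rk Λ_l^0` and `rk (Λ_S)₂⁰ = rk Λ_r^0`, so `rk Λ_l^0 = m ↔ rk (Λ_S)₁⁰ = m` and
`rk Λ_r^0 = m ↔ rk (Λ_S)₂⁰ = m`. -/
theorem wendland_comparison (Γ : Submodule ℤ (Fin m → ℝ))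
    (hfree : Module.Free ℤ Γ) (hfg : Module.Finite ℤ Γ)
    (hspan : Submodule.span ℝ (Γ : Set (Fin m → ℝ)) = ⊤)
    (B : Matrix (Fin m) (Fin m) ℝ) (hB : B.transpose = -B) :
    Function.Bijective (narainG' B) ∧
    Set.BijOn (narainG' B) (wendLatL Γ B : Set ((Fin m → ℝ) × (Fin m → ℝ)))
      ((fun α => (α, (0 : Fin m → ℝ))) '' (lat10' (narainLatS Γ B) : Set (Fin m → ℝ))) ∧
    Set.BijOn (narainG' B) (wendLatR Γ B : Set ((Fin m → ℝ) × (Fin m → ℝ)))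
      ((fun β => ((0 : Fin m → ℝ), β)) '' (lat20' (narainLatS Γ B) : Set (Fin m → ℝ))) ∧
    Module.finrank ℤ (lat10' (narainLatS Γ B)) = Module.finrank ℤ (wendLatL Γ B) ∧
    Module.finrank ℤ (lat20' (narainLatS Γ B)) = Module.finrank ℤ (wendLatR Γ B) ∧
    (Module.finrank ℤ (wendLatL Γ B) = m ↔ Module.finrank ℤ (lat10' (narainLatS Γ B)) = m) ∧
    (Module.finrank ℤ (wendLatR Γ B) = m ↔ Module.finrank ℤ (lat20' (narainLatS Γ B)) = m) := by
  obtain ⟨hbij, hl, hr, hrank₁, hrank₂⟩ := wendland_comparison_general Γ B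
  simp only [hbij, hl, hr, Module.finrank, hrank₁, hrank₂, and_self]

end
end
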